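/- For every channel k : 𝒴 → PMF(𝒴), the composed channel q := k ∘ g : 𝒳 → PMF(𝒴) satisfies (i) the expected distortion of the joint of (p_X, q) equals that of the joint of (distribution of Y, k): E[d_T(f(X), h(Ŷ))] = E[d_T(h(Y), h(Ŷ))], and (ii) I(X;Ŷ) under (p_X, q) is at most I(Y;Ŷ) under (distribution of Y, k). Consequently, R_XY(D;T) ≤ R_Y(D;T) for every D > 0. -/

import Mathlib

open scoped BigOperators

/-- Joint distribution P(a,b) = p(a)·k(a)(b) induced by a source `p` and a channel `k`,
as a real number. -/
noncomputable def jointP {A B : Type*} [Fintype A] [Fintype B] (p : PMF A) (k : A → PMF B)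
    (a : A) (b : B) : ℝ :=
  (p a * k a b).toReal

/-- Marginal distribution of the second coordinate of the joint induced by `(p, k)`. -/
noncomputable def margSnd {A B : Type*} [Fintype A] [Fintype B] (p : PMF A) (k : A → PMF B)
    (b : B) : ℝ :=
  ∑ a, jointP p k a b

/-- Mutual information I(A;B) = ∑_{a,b} P(a,b)·log(P(a,b)/(P(a)·P(b))) of the joint
induced by `(p, k)`; the convention 0·log 0 = 0 holds automatically in Lean. -/
noncomputable def mutualInfo {A B : Type*} [Fintype A] [Fintype B] (p : PMF A)
    (k : A → PMF B) : ℝ :=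
  ∑ a, ∑ b, jointP p k a b * Real.log (jointP p k a b / ((p a).toReal * margSnd p k b))

/-- Expected distortion E[d(A,B)] under the joint induced by `(p, k)`. -/
noncomputable def expDist {A B : Type*} [Fintype A] [Fintype B] (p : PMF A) (k : A → PMF B)
    (d : A → B → ℝ) : ℝ :=
  ∑ a, ∑ b, jointP p k a b * d a b

/-- Rate-distortion function: infimum of mutual information over all channels `A → PMF B`
meeting the expected-distortion constraint `≤ D`. -/
noncomputable def rate {A B : Type*} [Fintype A] [Fintype B] (p : PMF A) (d : A → B → ℝ)
    (D : ℝ) : ℝ :=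
  sInf { r : ℝ | ∃ k : A → PMF B, expDist p k d ≤ D ∧ r = mutualInfo p k }

/-- Conditional probability P(A = a | B = b) under the joint induced by `(p, k)`. -/
noncomputable def condProb {A B : Type*} [Fintype A] [Fintype B] (p : PMF A) (k : A → PMF B)
    (a : A) (b : B) : ℝ :=
  jointP p k a b / margSnd p k b

/-!
Replacing `X` by `Y = g X` is a change of variables under the pushforward: for the channel `k ∘ g`
the summands of the distortion and of the mutual information depend on `x` only through `g x`, and
the output law is the same, so both quantities are equal to those of `k`. Hence every value of
mutual information achievable from `Y` is achievable from `X`, and the infimum over the larger set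
is smaller because mutual information is nonnegative (Gibbs' inequality). When nothing is
achievable from `Y`, the infimum of `∅` in `ℝ` is the junk value `0`; nothing is then achievable
from `X` either, since the least distortion is attained by a deterministic map applied to `Y`.
-/

section InfoTheory

open InformationTheory

variable {A B C : Type*}

lemma sub_le_mul_log_div {x y : ℝ} (hx : 0 ≤ x) (hy : 0 ≤ y) (hxy : y = 0 → x = 0) :
    x - y ≤ x * Real.log (x / y) := by
  rcases hy.eq_or_lt with rfl | hy
  · simp [hxy rfl]
  · have hkl : 0 ≤ y * klFun (x / y) := mul_nonneg hy.le (klFun_nonneg (div_nonneg hx hy.le))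
    have hexpand : y * klFun (x / y) = x * Real.log (x / y) + y - x := by
      rw [klFun_apply]
      field_simp
    linarith

lemma sum_toReal_pmf [Fintype A] (p : PMF A) : ∑ a, (p a).toReal = 1 := by
  rw [← ENNReal.toReal_sum fun a _ => p.apply_ne_top a, ← tsum_fintype (L := .unconditional A),
    p.tsum_coe, ENNReal.toReal_one]

lemma sum_toReal_pmf_map_mul [Fintype A] [Fintype C] (p : PMF A) (g : A → C) (F : C → ℝ) :
    ∑ c, (p.map g c).toReal * F c = ∑ a, (p a).toReal * F (g a) := by
  let : MeasurableSpace A := ⊤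
  let : MeasurableSpace C := ⊤
  calc ∑ c, (p.map g c).toReal * F c
      = ∫ c, F c ∂(p.map g).toMeasure := by simp only [PMF.integral_eq_sum, smul_eq_mul]
    _ = ∫ a, F (g a) ∂p.toMeasure := by
        rw [← PMF.toMeasure_map g p measurable_from_top,
          MeasureTheory.integral_map measurable_from_top.aemeasurable
            measurable_from_top.aestronglyMeasurable]
    _ = ∑ a, (p a).toReal * F (g a) := by simp only [PMF.integral_eq_sum, smul_eq_mul]

variable [Fintype A] [Fintype B]

lemma jointP_eq_mul (p : PMF A) (k : A → PMF B) (a : A) (b : B) :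
    jointP p k a b = (p a).toReal * (k a b).toReal :=
  ENNReal.toReal_mul

lemma jointP_nonneg (p : PMF A) (k : A → PMF B) (a : A) (b : B) : 0 ≤ jointP p k a b :=
  ENNReal.toReal_nonneg

lemma margSnd_nonneg (p : PMF A) (k : A → PMF B) (b : B) : 0 ≤ margSnd p k b :=
  Finset.sum_nonneg fun a _ => jointP_nonneg p k a b

lemma jointP_le_margSnd (p : PMF A) (k : A → PMF B) (a : A) (b : B) :
    jointP p k a b ≤ margSnd p k b :=
  Finset.single_le_sum (fun a _ => jointP_nonneg p k a b) (Finset.mem_univ a)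

lemma jointP_eq_zero_of_mul_margSnd_eq_zero {p : PMF A} {k : A → PMF B} {a : A} {b : B}
    (h : (p a).toReal * margSnd p k b = 0) : jointP p k a b = 0 := by
  rcases mul_eq_zero.mp h with hp | hm
  · rw [jointP_eq_mul, hp, zero_mul]
  · exact le_antisymm (hm ▸ jointP_le_margSnd p k a b) (jointP_nonneg p k a b)

lemma sum_jointP (p : PMF A) (k : A → PMF B) (a : A) :
    ∑ b, jointP p k a b = (p a).toReal := by
  simp only [jointP_eq_mul, ← Finset.mul_sum, sum_toReal_pmf, mul_one]

lemma sum_margSnd (p : PMF A) (k : A → PMF B) : ∑ b, margSnd p k b = 1 := by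
  simp only [margSnd]
  rw [Finset.sum_comm]
  simp only [sum_jointP, sum_toReal_pmf]

theorem mutualInfo_nonneg (p : PMF A) (k : A → PMF B) : 0 ≤ mutualInfo p k :=
  calc (0 : ℝ) = ∑ a, ∑ b, (jointP p k a b - (p a).toReal * margSnd p k b) := by
        simp only [Finset.sum_sub_distrib, ← Finset.mul_sum, sum_jointP, sum_margSnd, mul_one,
          sub_self, Finset.sum_const_zero]
    _ ≤ mutualInfo p k :=
        Finset.sum_le_sum fun a _ => Finset.sum_le_sum fun b _ =>
          sub_le_mul_log_div (jointP_nonneg p k a b)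
            (mul_nonneg ENNReal.toReal_nonneg (margSnd_nonneg p k b))
            jointP_eq_zero_of_mul_margSnd_eq_zero

lemma expDist_eq_sum_mul (p : PMF A) (k : A → PMF B) (d : A → B → ℝ) :
    expDist p k d = ∑ a, (p a).toReal * ∑ b, (k a b).toReal * d a b := by
  simp only [expDist, jointP_eq_mul, Finset.mul_sum, mul_assoc]

lemma mutualInfo_eq_sum_mul (p : PMF A) (k : A → PMF B) :
    mutualInfo p k =
      ∑ a, (p a).toReal * ∑ b, (k a b).toReal * Real.log ((k a b).toReal / margSnd p k b) := by
  simp only [mutualInfo, Finset.mul_sum]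
  refine Finset.sum_congr rfl fun a _ => Finset.sum_congr rfl fun b _ => ?_
  rw [jointP_eq_mul]
  rcases eq_or_ne (p a).toReal 0 with hpa | hpa
  · simp only [hpa, zero_mul]
  · rw [mul_div_mul_left _ _ hpa, mul_assoc]

lemma expDist_pure (p : PMF A) (φ : A → B) (d : A → B → ℝ) :
    expDist p (fun a => PMF.pure (φ a)) d = ∑ a, (p a).toReal * d a (φ a) := by
  classical
  simp [expDist_eq_sum_mul, PMF.pure_apply, apply_ite ENNReal.toReal]

lemma expDist_pure_le {d : A → B → ℝ} {φ : A → B} (hφ : ∀ a b, d a (φ a) ≤ d a b)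
    (p : PMF A) (k : A → PMF B) :
    expDist p (fun a => PMF.pure (φ a)) d ≤ expDist p k d := by
  rw [expDist_pure, expDist_eq_sum_mul]
  gcongr with a
  calc d a (φ a) = ∑ b, (k a b).toReal * d a (φ a) := by
        rw [← Finset.sum_mul, sum_toReal_pmf, one_mul]
    _ ≤ ∑ b, (k a b).toReal * d a b := by
        gcongr with b
        exact hφ a b

variable [Fintype C]

theorem expDist_comp (p : PMF A) (g : A → C) (k : C → PMF B) (d : C → B → ℝ) :
    expDist p (fun a => k (g a)) (fun a b => d (g a) b) = expDist (p.map g) k d := by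
  simp only [expDist_eq_sum_mul, sum_toReal_pmf_map_mul]

lemma margSnd_comp (p : PMF A) (g : A → C) (k : C → PMF B) (b : B) :
    margSnd p (fun a => k (g a)) b = margSnd (p.map g) k b := by
  simp only [margSnd, jointP_eq_mul, sum_toReal_pmf_map_mul p g fun c => (k c b).toReal]

theorem mutualInfo_comp (p : PMF A) (g : A → C) (k : C → PMF B) :
    mutualInfo p (fun a => k (g a)) = mutualInfo (p.map g) k := by
  simp only [mutualInfo_eq_sum_mul, margSnd_comp, sum_toReal_pmf_map_mul]

lemma exists_channel_expDist_map_le [Nonempty B] (p : PMF A) (g : A → C) (d : C → B → ℝ) :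
    ∃ k : C → PMF B, ∀ q : A → PMF B,
      expDist (p.map g) k d ≤ expDist p q (fun a b => d (g a) b) := by
  choose φ hφ using fun c => Finite.exists_min (d c)
  refine ⟨fun c => PMF.pure (φ c), fun q => ?_⟩
  rw [← expDist_comp]
  exact expDist_pure_le (fun a => hφ (g a)) p q

theorem rate_comp_le_rate_map [Nonempty B] (p : PMF A) (g : A → C) (d : C → B → ℝ) (D : ℝ) :
    rate p (fun a b => d (g a) b) D ≤ rate (p.map g) d D := by
  by_cases hfeasible : ∃ k : C → PMF B, expDist (p.map g) k d ≤ D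
  · obtain ⟨k, hk⟩ := hfeasible
    refine csInf_le_csInf ⟨0, ?_⟩ ⟨_, k, hk, rfl⟩ ?_
    · rintro _ ⟨q, -, rfl⟩
      exact mutualInfo_nonneg p q
    · rintro _ ⟨k', hk', rfl⟩
      exact ⟨fun a => k' (g a), (expDist_comp p g k' d).trans_le hk',
        (mutualInfo_comp p g k').symm⟩
  · obtain ⟨k, hk⟩ := exists_channel_expDist_map_le p g d
    have hY : ∀ k' : C → PMF B, ¬ expDist (p.map g) k' d ≤ D := not_exists.mp hfeasible
    have hX : ∀ q : A → PMF B, ¬ expDist p q (fun a b => d (g a) b) ≤ D :=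
      fun q hq => hY k ((hk q).trans hq)
    simp only [rate, hX, hY, false_and, exists_false, le_refl]

theorem composed_channel_and_RXY_le_RY_general [Nonempty B] (p : PMF A) (g : A → C)
    (d : C → B → ℝ) :
    (∀ k : C → PMF B,
      expDist p (fun a => k (g a)) (fun a b => d (g a) b) = expDist (p.map g) k d ∧
      mutualInfo p (fun a => k (g a)) = mutualInfo (p.map g) k) ∧
    ∀ D : ℝ, rate p (fun a b => d (g a) b) D ≤ rate (p.map g) d D :=
  ⟨fun k => ⟨expDist_comp p g k d, mutualInfo_comp p g k⟩, rate_comp_le_rate_map p g d⟩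

end InfoTheory

/-- For every channel k : 𝒴 → PMF 𝒴, the composed channel q := k ∘ g satisfies
(i) equal expected task distortion and (ii) I(X;Ŷ) ≤ I(Y;Ŷ); consequently
R_XY(D;T) ≤ R_Y(D;T) for every D > 0. Here f = h ∘ g. -/
theorem composed_channel_and_RXY_le_RY
    {𝒳 𝒴 𝒯 : Type*} [Fintype 𝒳] [Fintype 𝒴] [Fintype 𝒯]
    [Nonempty 𝒳] [Nonempty 𝒴] [Nonempty 𝒯]
    (pX : PMF 𝒳) (g : 𝒳 → 𝒴) (h : 𝒴 → 𝒯)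
    (dT : 𝒯 → 𝒯 → ℝ) (hdT : ∀ t t', 0 ≤ dT t t') :
    (∀ k : 𝒴 → PMF 𝒴,
      expDist pX (fun x => k (g x)) (fun x yhat => dT (h (g x)) (h yhat))
          = expDist (pX.map g) k (fun y yhat => dT (h y) (h yhat)) ∧
      mutualInfo pX (fun x => k (g x)) ≤ mutualInfo (pX.map g) k) ∧
    (∀ D : ℝ, 0 < D →
      rate pX (fun x yhat => dT (h (g x)) (h yhat)) D
        ≤ rate (pX.map g) (fun y yhat => dT (h y) (h yhat)) D) := by
  obtain ⟨hcomp, hrate⟩ :=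
    composed_channel_and_RXY_le_RY_general pX g fun y yhat => dT (h y) (h yhat)
  exact ⟨fun k => (hcomp k).imp_right le_of_eq, fun D _ => hrate D⟩
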